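/- Let G be a group and K ⊆ G finite. Then K ∈ 𝔚_{BT} (i.e., there exists n ∈ ℕ such that every finite nonempty F ⊆ G satisfies |F \ kF| ≥ |F|/n for some k ∈ K) if and only if the subgroup ⟨K⟩ generated by K is non-amenable. -/

import Mathlib

open Pointwise

/-- The Følner condition for a group `H`: for every finite `S ⊆ H` and every `n ≥ 1`
there is a finite nonempty `F ⊆ H` with `|sF \ F| ≤ |F|/n` for all `s ∈ S`. -/
def FolnerCond (H : Type*) [Group H] : Prop :=
  ∀ S : Set H, S.Finite → ∀ n : ℕ, 0 < n →
    ∃ F : Set H, F.Finite ∧ F.Nonempty ∧ ∀ s ∈ S, n * (s • F \ F).ncard ≤ F.ncard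

/-!
The Følner condition makes sense for a finite set `S` of elements of a group acting on a type, and
both sides of the theorem are instances of it: `K` witnesses non-amenability iff the action of `G`
on itself has no `K`-Følner sets, while `⟨K⟩` is amenable iff its action on itself has `T`-Følner
sets for every finite `T ⊆ ⟨K⟩`. Two facts connect them.

* The number of points of `F` displaced by `g` is subadditive in `g` and invariant under inversion.
  Hence sets that are almost invariant under `S` are almost invariant under any given finite subset
  of the subgroup generated by `S`.
* If the action is free and `F` is almost invariant, then averaging over orbits yields one orbit
  whose intersection with `F` is almost invariant, and this orbit is a copy of the group. Applied to
  `⟨K⟩` acting on `G`, this moves Følner sets from `G` into `⟨K⟩`.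
-/

section Displacement

variable {G X : Type*} [Group G] [MulAction G X] {F : Set X}

lemma ncard_smul_sdiff_comm (g : G) (hF : F.Finite) :
    (g • F \ F).ncard = (F \ g • F).ncard := by
  have hsmul := Set.ncard_inter_add_ncard_sdiff_eq_ncard (g • F) F hF.smul_set
  have hself := Set.ncard_inter_add_ncard_sdiff_eq_ncard F (g • F) hF
  rw [Set.ncard_smul_set] at hsmul
  rw [Set.inter_comm] at hself
  omega

lemma ncard_mul_smul_sdiff_le (g h : G) (hF : F.Finite) :
    ((g * h) • F \ F).ncard ≤ (g • F \ F).ncard + (h • F \ F).ncard := by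
  have hsub : (g * h) • F \ F ⊆ (g • F \ F) ∪ g • (h • F \ F) := by
    rw [Set.smul_set_sdiff, ← mul_smul, Set.union_comm]
    exact sdiff_triangle _ _ _
  calc ((g * h) • F \ F).ncard
      ≤ ((g • F \ F) ∪ g • (h • F \ F)).ncard :=
        Set.ncard_le_ncard hsub (hF.smul_set.sdiff.union hF.smul_set.sdiff.smul_set)
    _ ≤ (g • F \ F).ncard + (g • (h • F \ F)).ncard := Set.ncard_union_le _ _
    _ = (g • F \ F).ncard + (h • F \ F).ncard := by rw [Set.ncard_smul_set]

lemma ncard_inv_smul_sdiff (g : G) (hF : F.Finite) :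
    (g⁻¹ • F \ F).ncard = (g • F \ F).ncard := by
  rw [ncard_smul_sdiff_comm g hF, ← Set.ncard_smul_set g, Set.smul_set_sdiff, smul_inv_smul]

end Displacement

lemma ncard_smul_image_sdiff_image {G X Y : Type*} [SMul G X] [SMul G Y] {f : X → Y}
    (hf : Function.Injective f) {g : G} (hfg : ∀ x, f (g • x) = g • f x) (F : Set X) :
    (g • f '' F \ f '' F).ncard = (g • F \ F).ncard := by
  rw [← Set.image_smul_comm f g F hfg, ← Set.image_sdiff hf, Set.ncard_image_of_injective _ hf]

section Fibers

lemma ncard_eq_sum_ncard_inter_fiber {X ι : Type*} {π : X → ι} {A : Set X} {t : Finset ι}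
    (hA : A.Finite) (hπ : Set.MapsTo π A t) : A.ncard = ∑ i ∈ t, (A ∩ π ⁻¹' {i}).ncard := by
  classical
  lift A to Finset X using hA
  rw [Set.ncard_coe_finset, Finset.card_eq_sum_card_fiberwise hπ]
  refine Finset.sum_congr rfl fun i _ => ?_
  rw [← Set.ncard_coe_finset, Finset.coe_filter]
  rfl

variable {G X ι : Type*} [SMul G X] {π : X → ι}

lemma smul_sdiff_inter_fiber {g : G} (hπ : ∀ x, π (g • x) = π x) (F : Set X) (i : ι) :
    (g • F \ F) ∩ π ⁻¹' {i} = g • (F ∩ π ⁻¹' {i}) \ (F ∩ π ⁻¹' {i}) := by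
  ext y
  constructor
  · rintro ⟨⟨⟨x, hx, rfl⟩, hgx⟩, hi⟩
    exact ⟨⟨x, ⟨hx, (hπ x).symm.trans hi⟩, rfl⟩, fun h => hgx h.1⟩
  · rintro ⟨⟨x, ⟨hx, hi⟩, rfl⟩, hgx⟩
    have hgi : π (g • x) = i := (hπ x).trans hi
    exact ⟨⟨⟨x, hx, rfl⟩, fun h => hgx ⟨h, hgi⟩⟩, hgi⟩

lemma exists_fiber_mul_sum_ncard_smul_sdiff_lt {S : Finset G}
    (hπ : ∀ g ∈ S, ∀ x, π (g • x) = π x) {n : ℕ} {F : Set X} (hF : F.Finite)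
    (hlt : n * ∑ g ∈ S, (g • F \ F).ncard < F.ncard) :
    ∃ i, n * ∑ g ∈ S, (g • (F ∩ π ⁻¹' {i}) \ (F ∩ π ⁻¹' {i})).ncard <
      (F ∩ π ⁻¹' {i}).ncard := by
  classical
  obtain ⟨t, ht⟩ := (hF.image π).exists_finset_coe
  have hFt : Set.MapsTo π F t := fun x hx => ht ▸ Set.mem_image_of_mem π hx
  have hdisp : ∀ g ∈ S, (g • F \ F).ncard =
      ∑ i ∈ t, (g • (F ∩ π ⁻¹' {i}) \ (F ∩ π ⁻¹' {i})).ncard := by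
    intro g hg
    have hmaps : Set.MapsTo π (g • F \ F) t := by
      rintro _ ⟨⟨x, hx, rfl⟩, -⟩
      exact (hπ g hg x).symm ▸ hFt hx
    simp only [ncard_eq_sum_ncard_inter_fiber hF.smul_set.sdiff hmaps,
      smul_sdiff_inter_fiber (hπ g hg)]
  rw [Finset.sum_congr rfl hdisp, Finset.sum_comm, Finset.mul_sum,
    ncard_eq_sum_ncard_inter_fiber hF hFt] at hlt
  obtain ⟨i, -, hi⟩ := Finset.exists_lt_of_sum_lt hlt
  exact ⟨i, hi⟩

end Fibers

/-- `F` is a `1/n`-Følner set for `S ⊆ G`, where `G` acts on `X`: it is finite, nonempty, and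
`|sF \ F| ≤ |F|/n` for all `s ∈ S`. The denominator is cleared, so that `n = 0`
imposes no almost-invariance. -/
structure IsFolnerSet {G X : Type*} [SMul G X] (S : Set G) (n : ℕ) (F : Set X) : Prop where
  finite : F.Finite
  nonempty : F.Nonempty
  mul_ncard_le : ∀ s ∈ S, n * (s • F \ F).ncard ≤ F.ncard

/-- The action of `G` on `X` has Følner sets for `S ⊆ G` of arbitrary precision. This localizes the
Følner condition to a single set `S`, and is meant for finite `S`. -/
def HasFolnerSets {G : Type*} (X : Type*) [SMul G X] (S : Set G) : Prop :=
  ∀ n : ℕ, 0 < n → ∃ F : Set X, IsFolnerSet S n F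

lemma folnerCond_iff_forall_hasFolnerSets {G : Type*} [Group G] :
    FolnerCond G ↔ ∀ S : Set G, S.Finite → HasFolnerSets G S := by
  refine forall₄_congr fun S _ n _ => exists_congr fun F => ?_
  exact ⟨fun ⟨hF, hne, hle⟩ => ⟨hF, hne, hle⟩, fun ⟨hF, hne, hle⟩ => ⟨hF, hne, hle⟩⟩

/- Averaging over orbits needs a single inequality that is additive in `F`, hence the sum over `S`;
its strictness replaces nonemptiness of `F`. -/
lemma hasFolnerSets_iff_exists_mul_sum_lt {G X : Type*} [SMul G X] {S : Finset G} :
    HasFolnerSets X (S : Set G) ↔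
      ∀ n : ℕ, ∃ F : Set X, F.Finite ∧ n * ∑ s ∈ S, (s • F \ F).ncard < F.ncard := by
  constructor
  · intro h n
    obtain ⟨F, hF⟩ := h ((S.card + 1) * (n + 1)) (by positivity)
    have hpos : 0 < F.ncard := (Set.ncard_pos hF.finite).2 hF.nonempty
    refine ⟨F, hF.finite, lt_of_mul_lt_mul_left ?_ (S.card + 1).zero_le⟩
    calc (S.card + 1) * (n * ∑ s ∈ S, (s • F \ F).ncard)
        ≤ (S.card + 1) * ((n + 1) * ∑ s ∈ S, (s • F \ F).ncard) := by
          gcongr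
          exact n.le_succ
      _ = ∑ s ∈ S, (S.card + 1) * (n + 1) * (s • F \ F).ncard := by
          rw [← mul_assoc, Finset.mul_sum]
      _ ≤ S.card * F.ncard := Finset.sum_le_card_nsmul S _ _ hF.mul_ncard_le
      _ < (S.card + 1) * F.ncard := by
          gcongr
          exact S.card.lt_succ_self
  · intro h n _
    obtain ⟨F, hF, hlt⟩ := h n
    refine ⟨F, hF, Set.nonempty_of_ncard_ne_zero (by omega), fun s hs => ?_⟩
    calc n * (s • F \ F).ncard
        ≤ n * ∑ s ∈ S, (s • F \ F).ncard := by
          gcongr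
          exact Finset.single_le_sum (f := fun s => (s • F \ F).ncard)
            (fun _ _ => Nat.zero_le _) hs
      _ ≤ F.ncard := hlt.le

section Group

variable {G X : Type*} [Group G] [MulAction G X] {S : Set G}

lemma not_hasFolnerSets_iff :
    ¬ HasFolnerSets X S ↔ ∃ n : ℕ, 0 < n ∧ ∀ F : Set X, F.Finite → F.Nonempty →
      ∃ s ∈ S, F.ncard ≤ n * (F \ s • F).ncard := by
  constructor
  · intro h
    simp only [HasFolnerSets, not_forall, not_exists] at h
    obtain ⟨n, hn, hF⟩ := h
    refine ⟨n, hn, fun F hfin hne => ?_⟩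
    by_contra! hlt
    refine hF F ⟨hfin, hne, fun s hs => ?_⟩
    rw [ncard_smul_sdiff_comm s hfin]
    exact (hlt s hs).le
  · rintro ⟨n, -, h⟩ hS
    obtain ⟨F, hF⟩ := hS (n + 1) n.succ_pos
    obtain ⟨s, hs, hle⟩ := h F hF.finite hF.nonempty
    have hpos : 0 < F.ncard := (Set.ncard_pos hF.finite).2 hF.nonempty
    have hlt : n * (F \ s • F).ncard < (n + 1) * (F \ s • F).ncard := by
      have := pos_of_mul_pos_right (hpos.trans_le hle) n.zero_le
      gcongr
      omega
    have hge := hF.mul_ncard_le s hs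
    rw [ncard_smul_sdiff_comm s hF.finite] at hge
    exact (hle.trans_lt hlt).not_ge hge

lemma exists_mul_ncard_le_of_mem_closure {g : G} (hg : g ∈ Subgroup.closure S) :
    ∃ c : ℕ, ∀ (n : ℕ) (F : Set X), IsFolnerSet S n F →
      n * (g • F \ F).ncard ≤ c * F.ncard := by
  induction hg using Subgroup.closure_induction with
  | mem s hs => exact ⟨1, fun n F hF => by simpa only [one_mul] using hF.mul_ncard_le s hs⟩
  | one => exact ⟨0, fun n F _ => by simp⟩
  | mul g h _ _ hg hh =>
    obtain ⟨c, hc⟩ := hg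
    obtain ⟨d, hd⟩ := hh
    refine ⟨c + d, fun n F hF => ?_⟩
    calc n * ((g * h) • F \ F).ncard
        ≤ n * ((g • F \ F).ncard + (h • F \ F).ncard) := by
          gcongr
          exact ncard_mul_smul_sdiff_le g h hF.finite
      _ = n * (g • F \ F).ncard + n * (h • F \ F).ncard := mul_add _ _ _
      _ ≤ c * F.ncard + d * F.ncard := add_le_add (hc n F hF) (hd n F hF)
      _ = (c + d) * F.ncard := (add_mul _ _ _).symm
  | inv g _ hg =>
    obtain ⟨c, hc⟩ := hg
    exact ⟨c, fun n F hF => by simpa only [ncard_inv_smul_sdiff g hF.finite] using hc n F hF⟩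

lemma HasFolnerSets.of_subset_closure (hS : HasFolnerSets X S) {T : Set G} (hT : T.Finite)
    (hTS : T ⊆ Subgroup.closure S) : HasFolnerSets X T := by
  intro n hn
  choose! c hc using fun g (hg : g ∈ Subgroup.closure S) =>
    exists_mul_ncard_le_of_mem_closure (X := X) hg
  obtain ⟨C, hC⟩ := (hT.image c).bddAbove
  obtain ⟨F, hF⟩ := hS ((C + 1) * n) (by positivity)
  refine ⟨F, hF.finite, hF.nonempty, fun g hg => ?_⟩
  have hcC : c g ≤ C + 1 := (hC (Set.mem_image_of_mem c hg)).trans C.le_succ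
  refine le_of_mul_le_mul_left ?_ C.succ_pos
  calc (C + 1) * (n * (g • F \ F).ncard)
      = (C + 1) * n * (g • F \ F).ncard := (mul_assoc _ _ _).symm
    _ ≤ c g * F.ncard := hc g (hTS hg) _ F hF
    _ ≤ (C + 1) * F.ncard := by gcongr

lemma folnerCond_iff_hasFolnerSets_of_closure_eq_top (hS : S.Finite)
    (hgen : Subgroup.closure S = ⊤) : FolnerCond G ↔ HasFolnerSets G S := by
  rw [folnerCond_iff_forall_hasFolnerSets]
  exact ⟨fun h => h S hS, fun h T hT => h.of_subset_closure hT (by simp [hgen])⟩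

lemma hasFolnerSets_iff_of_isCancelSMul [IsCancelSMul G X] [Nonempty X] (hS : S.Finite) :
    HasFolnerSets X S ↔ HasFolnerSets G S := by
  lift S to Finset G using hS
  have hinj (x : X) : Function.Injective fun g : G => g • x :=
    fun g h => IsCancelSMul.right_cancel g h x
  have hncard (x : X) (s : G) (A : Set G) :=
    ncard_smul_image_sdiff_image (hinj x) (g := s) (fun g => mul_smul s g x) A
  simp only [hasFolnerSets_iff_exists_mul_sum_lt]
  constructor
  · intro h n
    obtain ⟨F, hF, hlt⟩ := h n
    obtain ⟨i, hi⟩ := exists_fiber_mul_sum_ncard_smul_sdiff_lt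
      (π := Quotient.mk (MulAction.orbitRel G X))
      (fun g _ x => Quotient.sound (MulAction.mem_orbit x g)) hF hlt
    induction i using Quotient.inductionOn with | h x =>
    obtain ⟨A, hA⟩ : ∃ A : Set G, (fun g : G => g • x) '' A =
        F ∩ Quotient.mk (MulAction.orbitRel G X) ⁻¹' {⟦x⟧} :=
      Set.subset_range_iff_exists_image_eq.1 fun y hy => Quotient.exact hy.2
    have hAfin : A.Finite := by
      refine Set.Finite.of_finite_image ?_ (hinj x).injOn
      exact hA ▸ hF.inter_of_left _
    refine ⟨A, hAfin, ?_⟩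
    simpa only [← hA, hncard, Set.ncard_image_of_injective _ (hinj x)] using hi
  · intro h n
    obtain ⟨A, hA, hlt⟩ := h n
    obtain ⟨x⟩ := ‹Nonempty X›
    refine ⟨(fun g : G => g • x) '' A, hA.image _, ?_⟩
    simpa only [hncard, Set.ncard_image_of_injective _ (hinj x)] using hlt

lemma hasFolnerSets_coe_preimage {H : Subgroup G} (hSH : S ⊆ H) :
    HasFolnerSets X ((↑) ⁻¹' S : Set H) ↔ HasFolnerSets X S := by
  refine forall₂_congr fun n _ => exists_congr fun F => ⟨fun hF => ?_, fun hF => ?_⟩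
  · exact ⟨hF.finite, hF.nonempty, fun s hs => hF.mul_ncard_le ⟨s, hSH hs⟩ hs⟩
  · exact ⟨hF.finite, hF.nonempty, fun s hs => hF.mul_ncard_le s hs⟩

end Group

/-- A finite `K ⊆ G` belongs to `𝔚_{BT}` (there is `n` such that every finite nonempty
`F ⊆ G` satisfies `|F \ kF| ≥ |F|/n` for some `k ∈ K`) iff the subgroup `⟨K⟩` is
non-amenable. -/
theorem witness_iff_nonamenable {G : Type*} [Group G] (K : Finset G) :
    (∃ n : ℕ, 0 < n ∧ ∀ F : Set G, F.Finite → F.Nonempty →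
        ∃ k ∈ K, F.ncard ≤ n * (F \ k • F).ncard) ↔
      ¬ FolnerCond (Subgroup.closure (K : Set G)) := by
  set S : Set (Subgroup.closure (K : Set G)) := (↑) ⁻¹' (K : Set G)
  have hS : S.Finite := K.finite_toSet.preimage Subtype.val_injective.injOn
  have hamenable : FolnerCond (Subgroup.closure (K : Set G)) ↔ HasFolnerSets G (K : Set G) :=
    calc FolnerCond (Subgroup.closure (K : Set G))
        ↔ HasFolnerSets (Subgroup.closure (K : Set G)) S :=
          folnerCond_iff_hasFolnerSets_of_closure_eq_top hS Subgroup.closure_closure_coe_preimage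
      _ ↔ HasFolnerSets G S := (hasFolnerSets_iff_of_isCancelSMul hS).symm
      _ ↔ HasFolnerSets G (K : Set G) := hasFolnerSets_coe_preimage Subgroup.subset_closure
  rw [hamenable]
  exact not_hasFolnerSets_iff.symm
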